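/- Let C be a small category, E = Psh(C), and let I⊗(−) : E → E be a functorial cylinder with endpoint inclusions δ⁰, δ¹ such that I⊗0 ≅ 0 (e.g., because I⊗(−) has a right adjoint) and such that δ⁰ is a cartesian natural transformation (all its naturality squares are pullbacks). Let M be a class of maps such that: every map 0 → X from the initial presheaf lies in M; M is stable under pullback; and M is closed under Leibniz product with δ⁰ (i ∈ M implies δ⁰ ⊗̂ i ∈ M). Then for every X ∈ E, the identity map id_X lies in M. -/

import Mathlib

/-!
Statement 14 (Lemma `identities-in-M`): in a presheaf category with a functorial
cylinder such that `I⊗0 ≅ 0` and `δ⁰` is cartesian, if a class of maps `M` contains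
all maps from the initial object, is stable under pullback, and is closed under
Leibniz product with `δ⁰`, then `M` contains all identities.
-/

open CategoryTheory Category Limits

universe u

namespace GS

/-- A functorial cylinder: an endofunctor with two endpoint inclusions. -/
structure Cylinder (E : Type*) [Category E] where
  I : E ⥤ E
  δ : Fin 2 → (𝟭 E ⟶ I)

variable {E : Type*} [Category E]

/-- The Leibniz (pushout) product of the endpoint inclusion `δ k` with a map `i`. -/
noncomputable def Cylinder.leibniz (Q : Cylinder E) [HasPushouts E]
    (k : Fin 2) {A B : E} (i : A ⟶ B) :
    pushout ((Q.δ k).app A) i ⟶ Q.I.obj B :=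
  pushout.desc (Q.I.map i) ((Q.δ k).app B) (by simpa using ((Q.δ k).naturality i).symm)

variable {C : Type u} [SmallCategory C]

/-!
If `δ ⊗ A` is invertible, then `δ ⊗̂ (A ⟶ B)` is `δ ⊗ B` up to isomorphism; for initial `A` this
puts every `δ ⊗ B` in `M`. A cartesian transformation out of the identity functor is a monomorphism
at each object, since the square at a coequalizer detects equality of the coequalized maps. And the
identity of the domain of a monomorphism is its pullback along itself.
-/

theorem Cylinder.inr_leibniz [HasPushouts E] (Q : Cylinder E) (k : Fin 2) {A B : E} (i : A ⟶ B) :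
    pushout.inr ((Q.δ k).app A) i ≫ Q.leibniz k i = (Q.δ k).app B :=
  pushout.inr_desc _ _ _

theorem Cylinder.leibniz_mem_iff [HasPushouts E] (Q : Cylinder E) (k : Fin 2) {A B : E} (i : A ⟶ B)
    [IsIso ((Q.δ k).app A)] (M : MorphismProperty E) [M.RespectsIso] :
    M (Q.leibniz k i) ↔ M ((Q.δ k).app B) := by
  rw [← Q.inr_leibniz k i, M.cancel_left_of_respectsIso]

theorem mono_app_of_equifibered [HasCoequalizers E] {F : E ⥤ E} {α : 𝟭 E ⟶ F}
    (hα : NatTrans.Equifibered α) (X : E) : Mono (α.app X) where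
  right_cancellation a b h := (hα (coequalizer.π a b)).hom_ext (coequalizer.condition a b) h

theorem id_mem_of_mono {M : MorphismProperty E} [M.IsStableUnderBaseChange] {X Y : E} {f : X ⟶ Y}
    [Mono f] (hf : M f) : M (𝟙 X) :=
  M.of_isPullback (IsKernelPair.id_of_mono f) hf

theorem identities_mem_general [HasInitial E] [HasPushouts E] (Q : Cylinder E) (k : Fin 2)
    (h0 : IsInitial (Q.I.obj (⊥_ E))) (hcart : NatTrans.Equifibered (Q.δ k))
    (M : MorphismProperty E) [M.IsStableUnderBaseChange] (hinit : ∀ X : E, M (initial.to X))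
    (hleib : ∀ ⦃A B : E⦄ (i : A ⟶ B), M i → M (Q.leibniz k i)) (X : E) :
    M (𝟙 X) := by
  have : HasFiniteColimits E := hasFiniteColimits_of_hasInitial_and_pushouts
  have : IsIso ((Q.δ k).app (⊥_ E)) := isIso_of_isInitial initialIsInitial h0 _
  have hδ : M ((Q.δ k).app X) := (Q.leibniz_mem_iff k (initial.to X) M).mp (hleib _ (hinit X))
  have : Mono ((Q.δ k).app X) := mono_app_of_equifibered hcart X
  exact id_mem_of_mono hδ

theorem identities_mem (Q : Cylinder (Cᵒᵖ ⥤ Type u))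
    -- `I⊗0 ≅ 0`
    (h0 : IsInitial (Q.I.obj (⊥_ (Cᵒᵖ ⥤ Type u))))
    -- `δ⁰` is a cartesian natural transformation
    (hcart : ∀ ⦃A B : Cᵒᵖ ⥤ Type u⦄ (f : A ⟶ B),
      IsPullback f ((Q.δ 0).app A) ((Q.δ 0).app B) (Q.I.map f))
    (M : MorphismProperty (Cᵒᵖ ⥤ Type u))
    -- every map from the initial object lies in M
    (hinit : ∀ X : Cᵒᵖ ⥤ Type u, M (initial.to X))
    -- M is stable under pullback
    (hpb : ∀ ⦃A' A B' B : Cᵒᵖ ⥤ Type u⦄ (t : A' ⟶ A) (i' : A' ⟶ B') (i : A ⟶ B)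
      (b : B' ⟶ B), IsPullback t i' i b → M i → M i')
    -- M is closed under Leibniz product with `δ⁰`
    (hleib : ∀ ⦃A B : Cᵒᵖ ⥤ Type u⦄ (i : A ⟶ B), M i → M (Q.leibniz 0 i)) :
    ∀ X : Cᵒᵖ ⥤ Type u, M (𝟙 X) := by
  have : M.IsStableUnderBaseChange := ⟨fun sq hg => hpb _ _ _ _ sq hg⟩
  exact identities_mem_general Q 0 h0 hcart M hinit hleib

end GS
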